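/- arXiv:math/0404348 — 3 statements merged into one kernel-verified Lean document; each statement's English description precedes it below -/
import Mathlib

section
/- Let {M_m} be a sequence of n×n symmetric matrices converging to 0 with M_m/‖M_m‖ → M, let μ ∈ ℝ^n with μ₁ ≥ … ≥ μ_n, and let U_m → U be orthogonal matrices with Diag μ + M_m = U_m (Diag λ(Diag μ + M_m)) U_mᵀ for all m, where λ(·) is the vector of eigenvalues in nonincreasing order. Then for every μ-block-constant k-tensor T on ℝ^n and any permutation σ on {1,…,k}, the 2k-tensors (U_m(Diag^σ T)U_mᵀ − Diag^σ T)/‖M_m‖ converge, as m → ∞, to Σ_{l=1}^k (Diag^{σ_{(l)}} T^{(l)}_out)[M], where for a 2(k+1)-tensor S viewed as a (k+1)-tensor on matrices, S[M] denotes fixing the last matrix argument to M. -/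
open scoped BigOperators
open Filter Asymptotics Matrix

attribute [local instance] Matrix.normedAddCommGroup

noncomputable section

/-- A `k`-tensor on `ℝ^n`, identified with its array of entries. -/
abbrev Tensor (k n : ℕ) : Type := (Fin k → Fin n) → ℝ

/-- A `2k`-tensor on `ℝ^n`, with its indices grouped into two groups of `k`. -/
abbrev Tensor2 (k n : ℕ) : Type := (Fin k → Fin n) → (Fin k → Fin n) → ℝ

/-- The `σ`-Hadamard product of `k` matrices:
`(H₁ ∘_σ ⋯ ∘_σ H_k)^{i₁…i_k} = ∏ s, H_s^{i_s i_{σ⁻¹(s)}}`. -/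
def hadamardProd {k n : ℕ} (σ : Equiv.Perm (Fin k))
    (H : Fin k → Matrix (Fin n) (Fin n) ℝ) : Tensor k n :=
  fun i => ∏ s, H s (i s) (i (σ⁻¹ s))

/-- The dot product of two `k`-tensors. -/
def tdot {k n : ℕ} (T₁ T₂ : Tensor k n) : ℝ :=
  ∑ p : Fin k → Fin n, T₁ p * T₂ p

/-- `Diag^σ T`, the `2k`-tensor equal to `T^{i₁…i_k}` when `i_s = j_{σ(s)}` for all `s`,
and `0` otherwise. -/
def diagPerm {k n : ℕ} (σ : Equiv.Perm (Fin k)) (T : Tensor k n) : Tensor2 k n :=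
  fun i j => if ∀ s, i s = j (σ s) then T i else 0

/-- A `2k`-tensor viewed as a `k`-tensor on matrix arguments:
`S[H₁,…,H_k] = ∑_{p,q} S^{p₁…p_k}_{q₁…q_k} ∏ s, H_s^{p_s q_s}`. -/
def apply2 {k n : ℕ} (S : Tensor2 k n)
    (H : Fin k → Matrix (Fin n) (Fin n) ℝ) : ℝ :=
  ∑ p : Fin k → Fin n, ∑ q : Fin k → Fin n, S p q * ∏ s, H s (p s) (q s)

/-- Conjugation `U S Uᵀ` of a `2k`-tensor `S` by a matrix `U`. -/
def conj2 {k n : ℕ} (U : Matrix (Fin n) (Fin n) ℝ) (S : Tensor2 k n) : Tensor2 k n :=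
  fun i j => ∑ p : Fin k → Fin n, ∑ q : Fin k → Fin n,
    S p q * ((∏ s, U (i s) (p s)) * ∏ s, U (j s) (q s))

/-- For a `2(k+1)`-tensor `S` viewed as a `(k+1)`-tensor on matrices, `S[H]` fixes the last
matrix argument to `H`, producing a `2k`-tensor. -/
def lastApply {k n : ℕ} (S : Tensor2 (k+1) n)
    (H : Matrix (Fin n) (Fin n) ℝ) : Tensor2 k n :=
  fun i j => ∑ a : Fin n, ∑ b : Fin n, S (Fin.snoc i a) (Fin.snoc j b) * H a b

/-- `T[x]`: contraction of the last index of a `(k+1)`-tensor against a vector. -/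
def contract {k n : ℕ} (T : Tensor (k+1) n) (x : Fin n → ℝ) : Tensor k n :=
  fun i => ∑ a : Fin n, T (Fin.snoc i a) * x a

/-- A permutation `σ` of `{1,…,k}` viewed as a permutation of `{1,…,k+1}` fixing `k+1`. -/
def extPerm {k : ℕ} (σ : Equiv.Perm (Fin k)) : Equiv.Perm (Fin (k+1)) :=
  (Equiv.permCongr finSuccEquivLast).symm σ.optionCongr

/-- `σ_{(l)} := σ ∘ τ_l`, where `τ_l` is the transposition `(l, k+1)` (and `σ` fixes `k+1`).
Here `l : Fin (k+1)`; taking `l = Fin.last k` gives `σ_{(k+1)} = σ`. -/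
def permIns {k : ℕ} (σ : Equiv.Perm (Fin k)) (l : Fin (k+1)) : Equiv.Perm (Fin (k+1)) :=
  extPerm σ * Equiv.swap l (Fin.last k)

/-- A tensor is `μ`-block-constant if its entries agree on componentwise `μ`-equivalent
multi-indices (`i ∼ j` iff `μ i = μ j`). -/
def BlockConstant {k n : ℕ} (μ : Fin n → ℝ) (T : Tensor k n) : Prop :=
  ∀ i j : Fin k → Fin n, (∀ s, μ (i s) = μ (j s)) → T i = T j

/-- `H_in`: the diagonal-block part of `H` (w.r.t. the blocks of `μ`). -/
def matIn {n : ℕ} (μ : Fin n → ℝ) (H : Matrix (Fin n) (Fin n) ℝ) :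
    Matrix (Fin n) (Fin n) ℝ :=
  Matrix.of fun i j => if μ i = μ j then H i j else 0

/-- `H_out = H - H_in`: the off-diagonal-block part of `H`. -/
def matOut {n : ℕ} (μ : Fin n → ℝ) (H : Matrix (Fin n) (Fin n) ℝ) :
    Matrix (Fin n) (Fin n) ℝ :=
  H - matIn μ H

/-- The divided-difference tensor `T^{(l)}_out` of a `k`-tensor `T`, a `(k+1)`-tensor. -/
def outDD {k n : ℕ} (μ : Fin n → ℝ) (T : Tensor k n) (l : Fin k) : Tensor (k+1) n :=
  fun i => if μ (i l.castSucc) = μ (i (Fin.last k)) then 0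
    else (T (Function.update (fun s => i s.castSucc) l (i (Fin.last k)))
          - T (fun s => i s.castSucc)) / (μ (i (Fin.last k)) - μ (i l.castSucc))

/-- `T^{τ_l}`: the `(k+1)`-tensor equal to `T^{i₁…i_k}` on the hyperplane `i_l = i_{k+1}`
and `0` elsewhere. -/
def liftTau {k n : ℕ} (T : Tensor k n) (l : Fin k) : Tensor (k+1) n :=
  fun i => if i l.castSucc = i (Fin.last k) then T (fun s => i s.castSucc) else 0

/-- `T^{τ_l}_in`: the "inflated" `(k+1)`-tensor, equal to
`T^{i₁…i_{l-1} i_{k+1} i_{l+1}…i_k}` when `μ_{i_l} = μ_{i_{k+1}}` and `0` otherwise. -/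
def liftTauIn {k n : ℕ} (μ : Fin n → ℝ) (T : Tensor k n) (l : Fin k) : Tensor (k+1) n :=
  fun i => if μ (i l.castSucc) = μ (i (Fin.last k))
    then T (Function.update (fun s => i s.castSucc) l (i (Fin.last k))) else 0

/-- `lam` is the map sending each symmetric matrix to the vector of its eigenvalues
ordered nonincreasingly: it is nonincreasing and realized by an orthogonal
diagonalization. -/
def IsEigCF {n : ℕ} (lam : Matrix (Fin n) (Fin n) ℝ → Fin n → ℝ) : Prop :=
  ∀ A : Matrix (Fin n) (Fin n) ℝ, A.IsSymm →
    Antitone (lam A) ∧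
    ∃ U : Matrix (Fin n) (Fin n) ℝ, Uᵀ * U = 1 ∧
      A = U * Matrix.diagonal (lam A) * Uᵀ

/-- `h` is the concatenated vector `(λ(X₁ᵀ A X₁), …, λ(X_rᵀ A X_r))` of the nonincreasingly
ordered eigenvalues of the diagonal blocks of `A` (blocks determined by `μ`):
equivalently, `h` is nonincreasing within each block of `μ` and `Diag h` is obtained from
`A_in` by conjugating with a block-diagonal orthogonal matrix. -/
def IsBlockEig {n : ℕ} (μ : Fin n → ℝ) (A : Matrix (Fin n) (Fin n) ℝ)
    (h : Fin n → ℝ) : Prop :=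
  (∀ i j : Fin n, i ≤ j → μ i = μ j → h j ≤ h i) ∧
  ∃ V : Matrix (Fin n) (Fin n) ℝ, Vᵀ * V = 1 ∧
    (∀ i j, μ i ≠ μ j → V i j = 0) ∧
    Vᵀ * matIn μ A * V = Matrix.diagonal h

theorem aux_prod {ι : Type*} [DecidableEq ι] (r : ℕ → ℝ) (f : ι → ℕ → ℝ) (a d : ι → ℝ)
    (hf : ∀ s, Tendsto (f s) atTop (nhds (a s)))
    (hd : ∀ s, Tendsto (fun m => r m * (f s m - a s)) atTop (nhds (d s))) (S : Finset ι) :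
    Tendsto (fun m => r m * (∏ s ∈ S, f s m - ∏ s ∈ S, a s)) atTop
      (nhds (∑ l ∈ S, d l * ∏ s ∈ S.erase l, a s)) := by
  induction S using Finset.induction_on with
  | empty => simp
  | insert x S hx ih =>
    have h1 : Tendsto (fun m => ∏ s ∈ S, f s m) atTop (nhds (∏ s ∈ S, a s)) :=
      tendsto_finsetProd _ (fun s _ => hf s)
    have h2 := ((hd x).mul h1).add (ih.const_mul (a x))
    have e : ∑ l ∈ insert x S, d l * ∏ s ∈ (insert x S).erase l, a s
        = d x * ∏ s ∈ S, a s + a x * ∑ l ∈ S, d l * ∏ s ∈ S.erase l, a s := by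
      rw [Finset.sum_insert hx, Finset.erase_insert hx, Finset.mul_sum]
      congr 1
      refine Finset.sum_congr rfl fun l hl => ?_
      have hne : x ≠ l := fun h => hx (h ▸ hl)
      rw [Finset.erase_insert_of_ne hne, Finset.prod_insert (by simp [hx])]
      ring
    rw [e]
    refine h2.congr fun m => ?_
    rw [Finset.prod_insert hx, Finset.prod_insert hx]
    ring

theorem aux_antitone_eq {n : ℕ} (μ ν : Fin n → ℝ) (hμ : Antitone μ) (hν : Antitone ν)
    (h : (Matrix.diagonal μ).charpoly = (Matrix.diagonal ν).charpoly) : μ = ν := by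
  rw [Matrix.charpoly_diagonal, Matrix.charpoly_diagonal] at h
  have hm : ∀ f : Fin n → ℝ, (∏ i, (Polynomial.X - Polynomial.C (f i))).roots
      = ((List.ofFn f : List ℝ) : Multiset ℝ) := by
    intro f
    have e : ∏ i, (Polynomial.X - Polynomial.C (f i))
        = (((List.ofFn f : List ℝ) : Multiset ℝ).map
          fun a => Polynomial.X - Polynomial.C a).prod := by
      rw [Multiset.map_coe, Multiset.prod_coe, List.map_ofFn, List.prod_ofFn]
      rfl
    rw [e, Polynomial.roots_multiset_prod_X_sub_C]
  have h2 := congrArg Polynomial.roots h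
  rw [hm, hm, Multiset.coe_eq_coe] at h2
  exact List.ofFn_injective (h2.eq_of_sortedGE hμ.sortedGE_ofFn hν.sortedGE_ofFn)

theorem aux_lim {n : ℕ}
    (μ : Fin n → ℝ) (hμ : Antitone μ)
    (ν : ℕ → Fin n → ℝ) (hν : ∀ m, Antitone (ν m))
    (M : ℕ → Matrix (Fin n) (Fin n) ℝ)
    (hM0 : Tendsto M atTop (nhds 0))
    (U : ℕ → Matrix (Fin n) (Fin n) ℝ) (hUo : ∀ m, (U m)ᵀ * U m = 1)
    (Ulim : Matrix (Fin n) (Fin n) ℝ) (hUlim : Tendsto U atTop (nhds Ulim))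
    (hdec : ∀ m, Matrix.diagonal μ + M m
      = U m * Matrix.diagonal (ν m) * (U m)ᵀ) :
    Tendsto ν atTop (nhds μ) ∧ Ulimᵀ * Ulim = 1 ∧
      ∀ i j, μ i ≠ μ j → Ulim i j = 0 := by
  have hUt : Tendsto (fun m => (U m)ᵀ) atTop (nhds Ulimᵀ) :=
    (continuous_id.matrix_transpose.tendsto Ulim).comp hUlim
  have hOrth : Ulimᵀ * Ulim = 1 := by
    have := hUt.mul hUlim
    simp only [hUo] at this
    exact tendsto_nhds_unique this tendsto_const_nhds
  have hOrth' : Ulim * Ulimᵀ = 1 := mul_eq_one_comm.mp hOrth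
  have hd : ∀ m, Matrix.diagonal (ν m) = (U m)ᵀ * (Matrix.diagonal μ + M m) * U m := by
    intro m
    rw [hdec m]
    calc _ = ((U m)ᵀ * U m) * Matrix.diagonal (ν m) * ((U m)ᵀ * U m) := by simp [hUo]
      _ = _ := by simp only [Matrix.mul_assoc]
  have hA : Tendsto (fun m => Matrix.diagonal μ + M m) atTop (nhds (Matrix.diagonal μ)) := by
    simpa using (tendsto_const_nhds (x := Matrix.diagonal μ)).add hM0
  have hdl : Tendsto (fun m => Matrix.diagonal (ν m)) atTop
      (nhds (Ulimᵀ * Matrix.diagonal μ * Ulim)) := by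
    simp only [hd]
    exact (hUt.mul hA).mul hUlim
  set B := Ulimᵀ * Matrix.diagonal μ * Ulim with hB
  have hent : ∀ i j, Tendsto (fun m => Matrix.diagonal (ν m) i j) atTop (nhds (B i j)) :=
    fun i j => (tendsto_pi_nhds.mp ((tendsto_pi_nhds.mp hdl) i)) j
  let w : Fin n → ℝ := fun i => B i i
  have hw : ∀ i, Tendsto (fun m => ν m i) atTop (nhds (w i)) := by
    intro i
    simpa using hent i i
  have hBw : B = Matrix.diagonal w := by
    ext i j
    by_cases hij : i = j
    · subst hij; simp [w]
    · have := hent i j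
      simp only [Matrix.diagonal_apply_ne _ hij] at this
      rw [Matrix.diagonal_apply_ne _ hij]
      exact tendsto_nhds_unique this tendsto_const_nhds
  have hwa : Antitone w := fun i j hij =>
    le_of_tendsto_of_tendsto' (hw j) (hw i) (fun m => hν m hij)
  have hch : (Matrix.diagonal μ).charpoly = (Matrix.diagonal w).charpoly := by
    rw [← hBw, hB]
    rw [Matrix.mul_assoc, Matrix.charpoly_mul_comm, Matrix.mul_assoc, hOrth', Matrix.mul_one]
  have hwμ : μ = w := aux_antitone_eq μ w hμ hwa hch
  refine ⟨?_, hOrth, ?_⟩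
  · rw [hwμ]; exact tendsto_pi_nhds.mpr hw
  · intro i j hij
    rw [← hwμ] at hBw
    have hc : Matrix.diagonal μ * Ulim = Ulim * Matrix.diagonal μ := by
      calc Matrix.diagonal μ * Ulim = (Ulim * Ulimᵀ) * (Matrix.diagonal μ * Ulim) := by
            rw [hOrth', Matrix.one_mul]
        _ = Ulim * B := by rw [hB]; simp only [Matrix.mul_assoc]
        _ = _ := by rw [hBw]
    have := congrFun (congrFun hc i) j
    rw [Matrix.diagonal_mul, Matrix.mul_diagonal] at this
    have h3 : (μ i - μ j) * Ulim i j = 0 := by linarith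
    exact (mul_eq_zero.mp h3).resolve_left (sub_ne_zero.mpr hij)

/-- Derivative of `U Diag x Uᵀ` for block-constant `x`. -/
theorem aux_key {n : ℕ}
    (μ : Fin n → ℝ) (hμ : Antitone μ)
    (ν : ℕ → Fin n → ℝ) (hν : ∀ m, Antitone (ν m))
    (M : ℕ → Matrix (Fin n) (Fin n) ℝ)
    (hM0 : Tendsto M atTop (nhds 0))
    (r : ℕ → ℝ)
    (Mlim : Matrix (Fin n) (Fin n) ℝ)
    (hMdir : Tendsto (fun m => r m • M m) atTop (nhds Mlim))
    (U : ℕ → Matrix (Fin n) (Fin n) ℝ) (hUo : ∀ m, (U m)ᵀ * U m = 1)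
    (Ulim : Matrix (Fin n) (Fin n) ℝ) (hUlim : Tendsto U atTop (nhds Ulim))
    (hdec : ∀ m, Matrix.diagonal μ + M m
      = U m * Matrix.diagonal (ν m) * (U m)ᵀ)
    (x : Fin n → ℝ) (hx : ∀ i j, μ i = μ j → x i = x j) :
    Tendsto (fun m => U m * Matrix.diagonal x * (U m)ᵀ) atTop (nhds (Matrix.diagonal x)) ∧
    ∀ i j, Tendsto (fun m => r m * ((U m * Matrix.diagonal x * (U m)ᵀ) i j
        - Matrix.diagonal x i j)) atTop
      (nhds (if μ i = μ j then 0 else (x j - x i) / (μ j - μ i) * Mlim i j)) := by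
  obtain ⟨hνl, hOrth, hblk⟩ := aux_lim μ hμ ν hν M hM0 U hUo Ulim hUlim hdec
  have hOrth' : Ulim * Ulimᵀ = 1 := mul_eq_one_comm.mp hOrth
  have hUo' : ∀ m, U m * (U m)ᵀ = 1 := fun m => mul_eq_one_comm.mp (hUo m)
  have hUt : Tendsto (fun m => (U m)ᵀ) atTop (nhds Ulimᵀ) :=
    (continuous_id.matrix_transpose.tendsto Ulim).comp hUlim
  have hX : Tendsto (fun m => U m * Matrix.diagonal x * (U m)ᵀ) atTop
      (nhds (Matrix.diagonal x)) := by
    have h1 := (hUlim.mul (tendsto_const_nhds (x := Matrix.diagonal x))).mul hUt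
    have h2 : Ulim * Matrix.diagonal x = Matrix.diagonal x * Ulim := by
      ext i j
      rw [Matrix.diagonal_mul, Matrix.mul_diagonal]
      by_cases hij : μ i = μ j
      · rw [hx i j hij]; ring
      · rw [hblk i j hij]; ring
    rwa [h2, Matrix.mul_assoc, hOrth', Matrix.mul_one] at h1
  refine ⟨hX, fun i j => ?_⟩
  have entry : ∀ {F : ℕ → Matrix (Fin n) (Fin n) ℝ} {L : Matrix (Fin n) (Fin n) ℝ},
      Tendsto F atTop (nhds L) → ∀ i j, Tendsto (fun m => F m i j) atTop (nhds (L i j)) :=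
    fun h i j => (tendsto_pi_nhds.mp ((tendsto_pi_nhds.mp h) i)) j
  have hUe := entry hUlim
  split_ifs with hij
  · -- same block
    have hoff : ∀ p, μ i ≠ μ p → ∃ c, Tendsto (fun m => r m * U m i p) atTop (nhds c) := by
      intro p hp
      have hAU : ∀ m, (Matrix.diagonal μ + M m) * U m = U m * Matrix.diagonal (ν m) := by
        intro m
        rw [hdec m, Matrix.mul_assoc, hUo, Matrix.mul_one]
      have he : ∀ m, (M m * U m) i p = U m i p * (ν m p - μ i) := by
        intro m
        have := congrFun (congrFun (hAU m) i) p
        rw [Matrix.add_mul, Matrix.add_apply, Matrix.diagonal_mul, Matrix.mul_diagonal] at this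
        linarith
      have hνp : Tendsto (fun m => ν m p - μ i) atTop (nhds (μ p - μ i)) :=
        ((tendsto_pi_nhds.mp hνl) p).sub_const _
      have hne : μ p - μ i ≠ 0 := sub_ne_zero.mpr (Ne.symm hp)
      refine ⟨_, ((entry (hMdir.mul hUlim) i p).div hνp hne).congr' ?_⟩
      filter_upwards [hνp.eventually_ne hne] with m hm
      change (r m • M m * U m) i p / (ν m p - μ i) = r m * U m i p
      rw [Matrix.smul_mul, Matrix.smul_apply, he, smul_eq_mul]
      field_simp
    have hs : ∀ m, r m * ((U m * Matrix.diagonal x * (U m)ᵀ) i j - Matrix.diagonal x i j)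
        = ∑ p, (x p - x i) * ((r m * U m i p) * U m j p) := by
      intro m
      have h1 : ∑ p, U m i p * U m j p = (1 : Matrix (Fin n) (Fin n) ℝ) i j := by
        rw [← hUo' m, Matrix.mul_apply]; simp
      have h2 : Matrix.diagonal x i j = x i * (1 : Matrix (Fin n) (Fin n) ℝ) i j := by
        rw [Matrix.diagonal_apply, Matrix.one_apply]; simp
      rw [h2, ← h1, Matrix.mul_apply, Finset.mul_sum, ← Finset.sum_sub_distrib, Finset.mul_sum]
      refine Finset.sum_congr rfl fun p _ => ?_
      rw [Matrix.mul_diagonal, Matrix.transpose_apply]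
      ring
    simp only [hs]
    rw [← Finset.sum_const_zero (s := (Finset.univ : Finset (Fin n)))]
    refine tendsto_finsetSum _ fun p _ => ?_
    by_cases hp : μ i = μ p
    · simp [hx i p hp]
    · obtain ⟨c, hc⟩ := hoff p hp
      have := (hc.mul (hUe j p)).const_mul (x p - x i)
      rw [hblk j p (hij ▸ hp)] at this
      simpa using this
  · have hne : μ j - μ i ≠ 0 := sub_ne_zero.mpr (Ne.symm hij)
    have hij' : i ≠ j := fun h => hij (by rw [h])
    have hcomm : ∀ m, (U m * Matrix.diagonal x * (U m)ᵀ) * (Matrix.diagonal μ + M m)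
        = (Matrix.diagonal μ + M m) * (U m * Matrix.diagonal x * (U m)ᵀ) := by
      intro m
      rw [hdec m]
      have aux : ∀ y z : Fin n → ℝ, (U m * Matrix.diagonal y * (U m)ᵀ) *
          (U m * Matrix.diagonal z * (U m)ᵀ)
          = U m * (Matrix.diagonal y * Matrix.diagonal z) * (U m)ᵀ := by
        intro y z
        calc _ = U m * Matrix.diagonal y * ((U m)ᵀ * U m) * Matrix.diagonal z * (U m)ᵀ := by
              simp only [Matrix.mul_assoc]
          _ = _ := by rw [hUo]; simp only [Matrix.mul_assoc, Matrix.one_mul]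
      rw [aux, aux]
      congr 2
      simp only [Matrix.diagonal_mul_diagonal, mul_comm]
    have hlim := ((entry (hMdir.mul hX) i j).sub (entry (hX.mul hMdir) i j)).div_const (μ j - μ i)
    have e : (x j - x i) / (μ j - μ i) * Mlim i j
        = ((Mlim * Matrix.diagonal x) i j - (Matrix.diagonal x * Mlim) i j) / (μ j - μ i) := by
      rw [Matrix.diagonal_mul, Matrix.mul_diagonal]; ring
    rw [e]
    refine hlim.congr fun m => ?_
    have := congrFun (congrFun (hcomm m) i) j
    rw [Matrix.mul_add, Matrix.add_mul, Matrix.add_apply, Matrix.add_apply, Matrix.diagonal_mul,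
      Matrix.mul_diagonal] at this
    rw [Matrix.diagonal_apply_ne _ hij', Matrix.smul_mul, Matrix.mul_smul, Matrix.smul_apply,
      Matrix.smul_apply, smul_eq_mul, smul_eq_mul, div_eq_iff hne]
    linear_combination (-r m) * this

theorem aux_conj {k n : ℕ} (U : Matrix (Fin n) (Fin n) ℝ) (σ : Equiv.Perm (Fin k))
    (T : Tensor k n) (rep : Fin n → Fin n) (hrep : ∀ p : Fin k → Fin n, T (rep ∘ p) = T p)
    (i j : Fin k → Fin n) :
    conj2 U (diagPerm σ T) i j = ∑ c : Fin k → Fin n, T c * ∏ s,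
      (U * Matrix.diagonal (fun p => if rep p = c s then (1:ℝ) else 0) * Uᵀ) (i s) (j (σ s)) := by
  have h1 : conj2 U (diagPerm σ T) i j
      = ∑ p : Fin k → Fin n, T p * ∏ s, (U (i s) (p s) * U (j (σ s)) (p s)) := by
    unfold conj2 diagPerm
    refine Finset.sum_congr rfl fun p _ => ?_
    rw [Finset.sum_eq_single (p ∘ σ.symm)]
    · rw [if_pos (by simp), Finset.prod_mul_distrib]
      congr 2
      rw [← Equiv.prod_comp σ]
      simp
    · intro q _ hq
      rw [if_neg, zero_mul]
      intro h
      apply hq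
      ext s
      simp [h]
    · simp
  rw [h1]
  have h2 : ∀ c : Fin k → Fin n, ∏ s,
      (U * Matrix.diagonal (fun p => if rep p = c s then (1:ℝ) else 0) * Uᵀ) (i s) (j (σ s))
      = ∑ p : Fin k → Fin n, (if rep ∘ p = c then (1:ℝ) else 0) *
        ∏ s, (U (i s) (p s) * U (j (σ s)) (p s)) := by
    intro c
    simp only [Matrix.mul_apply (M := U * _), Matrix.mul_diagonal, Matrix.transpose_apply]
    rw [Finset.prod_univ_sum, Fintype.piFinset_univ]
    refine Finset.sum_congr rfl fun p _ => ?_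
    have : (if rep ∘ p = c then (1:ℝ) else 0) = ∏ s, if rep (p s) = c s then (1:ℝ) else 0 := by
      rw [Finset.prod_ite_zero]
      simp [funext_iff]
    rw [this, ← Finset.prod_mul_distrib]
    refine Finset.prod_congr rfl fun s _ => by ring
  simp only [h2, Finset.mul_sum]
  rw [Finset.sum_comm]
  refine Finset.sum_congr rfl fun p _ => ?_
  simp [hrep]

theorem aux_last {k n : ℕ} (σ : Equiv.Perm (Fin k)) (l : Fin k) (S : Tensor (k+1) n)
    (H : Matrix (Fin n) (Fin n) ℝ) (i j : Fin k → Fin n) :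
    lastApply (diagPerm (permIns σ l.castSucc) S) H i j
      = if ∀ s, s ≠ l → i s = j (σ s) then S (Fin.snoc i (j (σ l))) * H (j (σ l)) (i l) else 0 := by
  have hcond : ∀ a b : Fin n, (∀ s, (Fin.snoc i a : Fin (k+1) → Fin n) s
      = (Fin.snoc j b : Fin (k+1) → Fin n) (permIns σ l.castSucc s)) ↔
      ((∀ s, s ≠ l → i s = j (σ s)) ∧ a = j (σ l) ∧ b = i l) := by
    intro a b
    have e1 : permIns σ l.castSucc (Fin.last k) = (σ l).castSucc := by
      simp [permIns, extPerm, Equiv.permCongr]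
    have e2 : permIns σ l.castSucc l.castSucc = Fin.last k := by
      simp [permIns, extPerm, Equiv.permCongr]
    have e3 : ∀ s, s ≠ l → permIns σ l.castSucc s.castSucc = (σ s).castSucc := by
      intro s hs
      have : Equiv.swap l.castSucc (Fin.last k) s.castSucc = s.castSucc :=
        Equiv.swap_apply_of_ne_of_ne (fun h => hs (Fin.castSucc_injective _ h))
          (Fin.castSucc_lt_last s).ne
      simp [permIns, extPerm, Equiv.permCongr, this]
    constructor
    · intro h
      refine ⟨fun s hs => ?_, ?_, ?_⟩
      · have := h s.castSucc
        rwa [e3 s hs, Fin.snoc_castSucc, Fin.snoc_castSucc] at this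
      · have := h (Fin.last k)
        rwa [e1, Fin.snoc_last, Fin.snoc_castSucc] at this
      · have := h l.castSucc
        rw [e2, Fin.snoc_last, Fin.snoc_castSucc] at this
        exact this.symm
    · rintro ⟨h1, h2, h3⟩ s
      refine Fin.lastCases ?_ (fun s => ?_) s
      · rw [e1, Fin.snoc_last, Fin.snoc_castSucc, h2]
      · by_cases hs : s = l
        · subst hs; rw [e2, Fin.snoc_last, Fin.snoc_castSucc, h3]
        · rw [e3 s hs, Fin.snoc_castSucc, Fin.snoc_castSucc, h1 s hs]
  unfold lastApply diagPerm
  simp only [hcond]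
  by_cases hA : ∀ s, s ≠ l → i s = j (σ s)
  · rw [if_pos hA, Finset.sum_eq_single (j (σ l)), Finset.sum_eq_single (i l)]
    · rw [if_pos ⟨hA, rfl, rfl⟩]
    · intro b _ hb
      rw [if_neg (fun h => hb h.2.2), zero_mul]
    · simp
    · intro a _ ha
      refine Finset.sum_eq_zero fun b _ => ?_
      rw [if_neg (fun h => ha h.2.1), zero_mul]
    · simp
  · rw [if_neg hA]
    refine Finset.sum_eq_zero fun a _ => Finset.sum_eq_zero fun b _ => ?_
    rw [if_neg (fun h => hA h.1), zero_mul]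

theorem aux_pick {k n : ℕ} (T : Tensor k n) (l : Fin k) (w : Fin k → Fin n) (y : Fin n) :
    ∑ c : Fin k → Fin n, T c * ((if y = c l then (1:ℝ) else 0) *
      ∏ s ∈ Finset.univ.erase l, if w s = c s then (1:ℝ) else 0) = T (Function.update w l y) := by
  rw [Finset.sum_eq_single (Function.update w l y)]
  · rw [Finset.prod_eq_one]
    · simp
    · intro s hs
      rw [Function.update_of_ne (Finset.ne_of_mem_erase hs), if_pos rfl]
  · intro c _ hc
    rw [Finset.prod_ite_zero]
    by_cases h1 : y = c l
    · rw [if_neg (c := ∀ i ∈ Finset.univ.erase l, w i = c i), mul_zero, mul_zero]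
      intro h
      apply hc
      ext s
      by_cases hs : s = l
      · subst hs; simp [h1]
      · rw [Function.update_of_ne hs, h s (by simp [hs])]
    · simp [h1]
  · simp

/-- Corollary `dec14bc`. With `M_m → 0` symmetric, `M_m/‖M_m‖ → M`,
`μ` nonincreasing, and orthogonal `U_m → U` satisfying
`Diag μ + M_m = U_m (Diag λ(Diag μ + M_m)) U_mᵀ`: for every `μ`-block-constant
`k`-tensor `T` and permutation `σ` of `{1,…,k}`, the `2k`-tensors
`(U_m(Diag^σ T)U_mᵀ − Diag^σ T)/‖M_m‖` converge to
`∑_{l=1}^k (Diag^{σ_{(l)}} T^{(l)}_out)[M]`. -/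
theorem statement16 {n k : ℕ}
    (μ : Fin n → ℝ) (hμ : Antitone μ)
    (lam : Matrix (Fin n) (Fin n) ℝ → Fin n → ℝ) (hlam : IsEigCF lam)
    (M : ℕ → Matrix (Fin n) (Fin n) ℝ) (hMsym : ∀ m, (M m).IsSymm)
    (hM0 : Tendsto M atTop (nhds 0))
    (Mlim : Matrix (Fin n) (Fin n) ℝ)
    (hMdir : Tendsto (fun m => ‖M m‖⁻¹ • M m) atTop (nhds Mlim))
    (U : ℕ → Matrix (Fin n) (Fin n) ℝ) (hUo : ∀ m, (U m)ᵀ * U m = 1)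
    (Ulim : Matrix (Fin n) (Fin n) ℝ) (hUlim : Tendsto U atTop (nhds Ulim))
    (hdec : ∀ m, Matrix.diagonal μ + M m
      = U m * Matrix.diagonal (lam (Matrix.diagonal μ + M m)) * (U m)ᵀ)
    (T : Tensor k n) (hT : BlockConstant μ T) (σ : Equiv.Perm (Fin k))
    : Tendsto
        (fun m => ‖M m‖⁻¹ • (conj2 (U m) (diagPerm σ T) - diagPerm σ T))
        atTop
        (nhds (∑ l : Fin k,
          lastApply (diagPerm (permIns σ l.castSucc) (outDD μ T l)) Mlim)) := by
  obtain ⟨rep, hrep1, hrep2⟩ : ∃ rep : Fin n → Fin n, (∀ i, μ (rep i) = μ i) ∧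
      ∀ i j, μ i = μ j → rep i = rep j := by
    refine ⟨fun i => Set.rangeSplitting μ ⟨μ i, i, rfl⟩, fun i => ?_, fun i j h => ?_⟩
    · exact Set.apply_rangeSplitting μ _
    · simp only [h]
  have hTrep : ∀ p : Fin k → Fin n, T (rep ∘ p) = T p := fun p => hT _ _ (fun s => hrep1 _)
  have hAsym : ∀ m, (Matrix.diagonal μ + M m).IsSymm := fun m =>
    (Matrix.isSymm_diagonal μ).add (hMsym m)
  have hMls : ∀ a b, Mlim a b = Mlim b a := by
    intro a b
    have e : ∀ a b, Tendsto (fun m => (‖M m‖⁻¹ • M m) a b) atTop (nhds (Mlim a b)) :=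
      fun a b => (tendsto_pi_nhds.mp ((tendsto_pi_nhds.mp hMdir) a)) b
    refine tendsto_nhds_unique (e a b) ((e b a).congr fun m => ?_)
    rw [Matrix.smul_apply, Matrix.smul_apply, (hMsym m).apply]
  let x : Fin n → Fin n → ℝ := fun c p => if rep p = c then (1:ℝ) else 0
  have key := fun c : Fin n => aux_key μ hμ (fun m => lam (Matrix.diagonal μ + M m))
    (fun m => (hlam _ (hAsym m)).1) M hM0 (fun m => ‖M m‖⁻¹) Mlim hMdir U hUo Ulim hUlim hdec
    (x c) (fun i j h => by simp only [x, hrep2 i j h])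
  refine tendsto_pi_nhds.mpr fun i => tendsto_pi_nhds.mpr fun j => ?_
  have hconj1 : diagPerm σ T i j
      = ∑ c : Fin k → Fin n, T c * ∏ s, Matrix.diagonal (x (c s)) (i s) (j (σ s)) := by
    have h := aux_conj (1 : Matrix (Fin n) (Fin n) ℝ) σ T rep hTrep i j
    have h0 : conj2 (1 : Matrix (Fin n) (Fin n) ℝ) (diagPerm σ T) i j = diagPerm σ T i j := by
      unfold conj2
      have hone : ∀ a b : Fin k → Fin n, ∏ s, (1 : Matrix (Fin n) (Fin n) ℝ) (a s) (b s)
          = if a = b then 1 else 0 := by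
        intro a b
        simp only [Matrix.one_apply]
        rw [Finset.prod_ite_zero]
        simp [funext_iff]
      simp [hone]
    rw [← h0, h]
    simp only [Matrix.transpose_one, Matrix.one_mul, Matrix.mul_one, x]
  have hlim : Tendsto (fun m => ∑ c : Fin k → Fin n, T c * (‖M m‖⁻¹ *
      (∏ s, (U m * Matrix.diagonal (x (c s)) * (U m)ᵀ) (i s) (j (σ s))
        - ∏ s, Matrix.diagonal (x (c s)) (i s) (j (σ s))))) atTop
      (nhds (∑ c : Fin k → Fin n, T c * ∑ l,
        (if μ (i l) = μ (j (σ l)) then 0 else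
          (x (c l) (j (σ l)) - x (c l) (i l)) / (μ (j (σ l)) - μ (i l)) * Mlim (i l) (j (σ l))) *
        ∏ s ∈ Finset.univ.erase l, Matrix.diagonal (x (c s)) (i s) (j (σ s)))) := by
    refine tendsto_finsetSum _ fun c _ => Tendsto.const_mul _ ?_
    exact aux_prod (fun m => ‖M m‖⁻¹)
      (fun s m => (U m * Matrix.diagonal (x (c s)) * (U m)ᵀ) (i s) (j (σ s))) _ _
      (fun s => (tendsto_pi_nhds.mp ((tendsto_pi_nhds.mp (key (c s)).1) (i s))) (j (σ s)))
      (fun s => (key (c s)).2 (i s) (j (σ s))) Finset.univ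
  have hval : (∑ l : Fin k, lastApply (diagPerm (permIns σ l.castSucc) (outDD μ T l)) Mlim) i j
      = ∑ c : Fin k → Fin n, T c * ∑ l,
        (if μ (i l) = μ (j (σ l)) then 0 else
          (x (c l) (j (σ l)) - x (c l) (i l)) / (μ (j (σ l)) - μ (i l)) * Mlim (i l) (j (σ l))) *
        ∏ s ∈ Finset.univ.erase l, Matrix.diagonal (x (c s)) (i s) (j (σ s)) := by
    simp only [Finset.mul_sum]
    rw [Finset.sum_comm, Finset.sum_apply, Finset.sum_apply]
    refine Finset.sum_congr rfl fun l _ => ?_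
    rw [aux_last]
    by_cases hA : ∀ s, s ≠ l → i s = j (σ s)
    · rw [if_pos hA]
      have hprod : ∀ c : Fin k → Fin n, ∏ s ∈ Finset.univ.erase l,
          Matrix.diagonal (x (c s)) (i s) (j (σ s))
          = ∏ s ∈ Finset.univ.erase l, if (rep ∘ i) s = c s then (1:ℝ) else 0 := by
        intro c
        refine Finset.prod_congr rfl fun s hs => ?_
        rw [← hA s (Finset.ne_of_mem_erase hs), Matrix.diagonal_apply_eq]
        rfl
      simp only [hprod]
      by_cases hb : μ (i l) = μ (j (σ l))
      · simp [outDD, hb]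
      · have hu : ∀ y, Function.update (rep ∘ i) l (rep y) = rep ∘ Function.update i l y :=
          fun y => (Function.comp_update rep i l y).symm
        have p1 := aux_pick T l (rep ∘ i) (rep (j (σ l)))
        have p2 := aux_pick T l (rep ∘ i) (rep (i l))
        rw [hu, hTrep] at p1 p2
        rw [Function.update_eq_self] at p2
        simp only [outDD, Fin.snoc_castSucc, Fin.snoc_last, if_neg hb]
        rw [← p1, ← p2, hMls (j (σ l)) (i l), ← Finset.sum_sub_distrib, Finset.sum_div,
          Finset.sum_mul]
        refine Finset.sum_congr rfl fun c _ => ?_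
        simp only [x]
        ring
    · rw [if_neg hA]
      push Not at hA
      obtain ⟨s, hs, hne⟩ := hA
      refine (Finset.sum_eq_zero fun c _ => ?_).symm
      have hz : ∏ s ∈ Finset.univ.erase l, Matrix.diagonal (x (c s)) (i s) (j (σ s)) = 0 :=
        Finset.prod_eq_zero (i := s) (by simp [hs]) (Matrix.diagonal_apply_ne _ hne)
      rw [hz, mul_zero, mul_zero]
  rw [hval]
  refine hlim.congr fun m => ?_
  rw [Pi.smul_apply, Pi.smul_apply, Pi.sub_apply, Pi.sub_apply, smul_eq_mul, hconj1,
    aux_conj (U m) σ T rep hTrep i j, ← Finset.sum_sub_distrib, Finset.mul_sum]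
  refine Finset.sum_congr rfl fun c _ => ?_
  simp only [x]
  ring

end
end

section
/- Let T₁,…,T_s be s-tensors on ℝ^n such that: (i) for every multi-index (i₁,…,i_s), whenever i_p = i_q one has T_p^{i₁…i_s} = T_q^{i₁…i_s}; and (ii) whenever the entries of (i₁,…,i_s) are pairwise distinct, T_l^{i₁…i_s} = 0 for all l. Then Σ_{σ ∈ P^{s-1}} Σ_{l=1}^{s} sign(σ_{(l)}) · Diag^{σ_{(l)}} T_l = 0, where the outer sum is over all permutations σ on {1,…,s−1}. -/
open scoped BigOperators
open Filter Asymptotics Matrix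

attribute [local instance] Matrix.normedAddCommGroup

noncomputable section

theorem extPerm_last {k : ℕ} (σ : Equiv.Perm (Fin k)) :
    extPerm σ (Fin.last k) = Fin.last k := by
  simp [extPerm, Equiv.permCongr]

theorem extPerm_inj {k : ℕ} : Function.Injective (extPerm (k := k)) := by
  intro σ τ h
  exact Equiv.optionCongr_injective ((Equiv.permCongr finSuccEquivLast).symm.injective h)

theorem permIns_apply_self {k : ℕ} (σ : Equiv.Perm (Fin k)) (l : Fin (k+1)) :
    permIns σ l l = Fin.last k := by
  simp [permIns, extPerm_last]

theorem permIns_bij {k : ℕ} :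
    Function.Bijective
      (fun x : Equiv.Perm (Fin k) × Fin (k+1) => permIns x.1 x.2) := by
  rw [Fintype.bijective_iff_injective_and_card]
  refine ⟨?_, ?_⟩
  · rintro ⟨σ, l⟩ ⟨τ, m⟩ h
    have h' : permIns σ l = permIns τ m := h
    have hl : l = m := by
      apply (permIns τ m).injective
      rw [permIns_apply_self, ← h', permIns_apply_self]
    subst hl
    have h3 : extPerm σ = extPerm τ := by
      unfold permIns at h'
      exact mul_right_cancel h'
    rw [extPerm_inj h3]
  · simp [Fintype.card_perm, Nat.factorial_succ, mul_comm]

/-- Proposition `k-p`. Here the paper's `s` equals `k+1`. Let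
`T₁,…,T_{k+1}` be `(k+1)`-tensors such that (i) for every multi-index `p`,
`(T₁^p,…,T_{k+1}^p) ⪯ p` (i.e. `p_a = p_b` implies `T_a^p = T_b^p`), and (ii) `T_l^p = 0`
for all `l` whenever `p` has pairwise distinct entries. Then
`∑_{σ ∈ P^{s-1}} ∑_{l=1}^{s} sign(σ_{(l)}) Diag^{σ_{(l)}} T_l = 0`. -/
theorem statement17 {n k : ℕ} (T : Fin (k+1) → Tensor (k+1) n)
    (h1 : ∀ (p : Fin (k+1) → Fin n) (a b : Fin (k+1)), p a = p b → T a p = T b p)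
    (h2 : ∀ p : Fin (k+1) → Fin n, Function.Injective p → ∀ l, T l p = 0) :
    ∑ σ : Equiv.Perm (Fin k), ∑ l : Fin (k+1),
        ((Equiv.Perm.sign (permIns σ l) : ℤ) • diagPerm (permIns σ l) (T l))
      = (0 : Tensor2 (k+1) n) := by
  funext i j
  have key : ∑ π : Equiv.Perm (Fin (k+1)),
      (((Equiv.Perm.sign π : ℤ) : ℝ) *
        (if ∀ s, i s = j (π s) then T (π⁻¹ (Fin.last k)) i else 0)) = 0 := by
    by_cases hi : Function.Injective i
    · apply Finset.sum_eq_zero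
      intro π _
      rw [h2 i hi]
      simp
    · obtain ⟨a, b, hab, hne⟩ : ∃ a b, i a = i b ∧ a ≠ b := by
        simpa [Function.Injective] using hi
      have hsw : ∀ s, i (Equiv.swap a b s) = i s := by
        intro s
        rw [Equiv.swap_apply_def]
        split_ifs with h h' <;> simp_all
      have hneg := Equiv.sum_comp (Equiv.mulRight (Equiv.swap a b))
        (fun π : Equiv.Perm (Fin (k+1)) => (((Equiv.Perm.sign π : ℤ) : ℝ) *
        (if ∀ s, i s = j (π s) then T (π⁻¹ (Fin.last k)) i else 0)))
      have hterm : ∀ π : Equiv.Perm (Fin (k+1)),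
          (((Equiv.Perm.sign (π * Equiv.swap a b) : ℤ) : ℝ) *
          (if ∀ s, i s = j ((π * Equiv.swap a b) s)
            then T ((π * Equiv.swap a b)⁻¹ (Fin.last k)) i else 0)) =
          - (((Equiv.Perm.sign π : ℤ) : ℝ) *
          (if ∀ s, i s = j (π s) then T (π⁻¹ (Fin.last k)) i else 0)) := by
        intro π
        have e1 : (∀ s, i s = j ((π * Equiv.swap a b) s)) ↔ ∀ s, i s = j (π s) := by
          constructor
          · intro h s
            have := h (Equiv.swap a b s)
            simpa [hsw] using this
          · intro h s
            have := h (Equiv.swap a b s)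
            rw [hsw] at this
            simpa using this
        have e2 : T ((π * Equiv.swap a b)⁻¹ (Fin.last k)) i = T (π⁻¹ (Fin.last k)) i := by
          apply h1
          rw [_root_.mul_inv_rev, Equiv.swap_inv, Equiv.Perm.mul_apply, hsw]
        rw [e2, if_congr e1 rfl rfl, Equiv.Perm.sign_mul, Equiv.Perm.sign_swap hne]
        push_cast
        ring
      have hneg2 := (Finset.sum_congr rfl (fun π _ => (hterm π).symm)).trans hneg
      rw [Finset.sum_neg_distrib] at hneg2
      linarith
  refine Eq.trans ?_ key
  rw [← Fintype.sum_bijective _ permIns_bij _ _ (fun _ => rfl),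
    Fintype.sum_prod_type]
  simp only [Finset.sum_apply]
  refine Finset.sum_congr rfl fun σ _ => Finset.sum_congr rfl fun l _ => ?_
  have : (permIns σ l)⁻¹ (Fin.last k) = l := by
    rw [Equiv.Perm.inv_eq_iff_eq, permIns_apply_self]
  rw [this, ← zsmul_eq_mul]
  rfl

end
end

section
/- Fix μ ∈ ℝ^n. Let ν be a permutation on {1,…,k+1} with s disjoint cycles such that ν(k+1) = k+1, let T be a μ-block-constant s-tensor on ℝ^n, U a block-diagonal orthogonal matrix (U^{ij} = 0 whenever μ_i ≠ μ_j), M a symmetric matrix, and h ∈ ℝ^n a vector with UᵀM_in U = Diag h. Then T^ν[h] = T^ν[diag M], where diag M = (M^{11},…,M^{nn}). -/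
open scoped BigOperators
open Filter Asymptotics Matrix

attribute [local instance] Matrix.normedAddCommGroup

noncomputable section

/-- `T^ν`: the lifting of an `s`-tensor `T` to a `(k+1)`-tensor along a permutation `ν`
of `{1,…,k+1}` with `s` disjoint cycles. The cycles are labelled by `Fin s` via a
labelling map `c` (constant exactly on cycles), and `r` picks a representative of each
cycle. `(T^ν)^{i₁…i_{k+1}} = T^{p₁…p_s}` if `i_l = i_{ν(l)}` for all `l` (where `p_t`
is the common value of `i` on the `t`-th cycle), and `0` otherwise. -/
def cycleLift {k s n : ℕ} (ν : Equiv.Perm (Fin (k+1))) (r : Fin s → Fin (k+1))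
    (T : Tensor s n) : Tensor (k+1) n :=
  fun i => if ∀ l, i (ν l) = i l then T (fun t => i (r t)) else 0

/-- Proposition `prop-1`. Fix `μ`. Let `ν` be a permutation of
`{1,…,k+1}` with `s` disjoint cycles and `ν(k+1) = k+1` (the cycles being labelled by
`c : Fin (k+1) → Fin s` with section `r`), let `T` be a `μ`-block-constant `s`-tensor,
`U` a block-diagonal orthogonal matrix, `M` symmetric, and `h` with
`UᵀM_in U = Diag h`. Then `T^ν[h] = T^ν[diag M]`. -/
theorem statement19 {n k s : ℕ} (μ : Fin n → ℝ)
    (ν : Equiv.Perm (Fin (k+1))) (hν : ν (Fin.last k) = Fin.last k)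
    (c : Fin (k+1) → Fin s) (hc : ∀ a b : Fin (k+1), c a = c b ↔ ν.SameCycle a b)
    (r : Fin s → Fin (k+1)) (hr : ∀ t, c (r t) = t)
    (T : Tensor s n) (hT : BlockConstant μ T)
    (U : Matrix (Fin n) (Fin n) ℝ) (hU : Uᵀ * U = 1)
    (hUb : ∀ i j : Fin n, μ i ≠ μ j → U i j = 0)
    (M : Matrix (Fin n) (Fin n) ℝ) (hM : M.IsSymm)
    (h : Fin n → ℝ) (hh : Uᵀ * matIn μ M * U = Matrix.diagonal h) :
    contract (cycleLift ν r T) h = contract (cycleLift ν r T) (Matrix.diag M) := by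
  have hUU : U * Uᵀ = 1 := mul_eq_one_comm.mp hU
  funext i
  have hf : ∀ a b : Fin n, μ a = μ b →
      cycleLift ν r T (Fin.snoc i a) = cycleLift ν r T (Fin.snoc i b) := by
    intro a b hab
    have key : ∀ a b : Fin n,
        (∀ l, (Fin.snoc i a : Fin (k+1) → Fin n) (ν l) = (Fin.snoc i a : Fin (k+1) → Fin n) l) →
        (∀ l, (Fin.snoc i b : Fin (k+1) → Fin n) (ν l) = (Fin.snoc i b : Fin (k+1) → Fin n) l) := by
      intro a b H l
      have Hl := H l
      rcases Fin.eq_castSucc_or_eq_last l with ⟨l', rfl⟩ | rfl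
      · rcases Fin.eq_castSucc_or_eq_last (ν l'.castSucc) with ⟨m, hm⟩ | hm
        · rw [hm] at Hl ⊢
          simpa using Hl
        · exfalso
          have := ν.injective (hm.trans hν.symm)
          exact (Fin.castSucc_lt_last l').ne this
      · rw [hν]
    unfold cycleLift
    by_cases H : ∀ l, (Fin.snoc i a : Fin (k+1) → Fin n) (ν l) = (Fin.snoc i a : Fin (k+1) → Fin n) l
    · rw [if_pos H, if_pos (key a b H)]
      apply hT
      intro t
      rcases Fin.eq_castSucc_or_eq_last (r t) with ⟨m, hm⟩ | hm
      · rw [hm]; simp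
      · rw [hm]; simpa using hab
    · rw [if_neg H, if_neg (fun H' => H (key b a H'))]
  unfold contract
  generalize hg : (fun a => cycleLift ν r T (Fin.snoc i a)) = f
  have hg' : ∀ a, cycleLift ν r T (Fin.snoc i a) = f a := fun a => congrFun hg a
  simp only [hg'] at hf ⊢
  have hcomm : U * Matrix.diagonal f = Matrix.diagonal f * U := by
    ext a b
    rw [Matrix.mul_diagonal, Matrix.diagonal_mul]
    by_cases hab : μ a = μ b
    · rw [hf a b hab, mul_comm]
    · rw [hUb a b hab]; simp
  have h1 : ∑ a, f a * h a = Matrix.trace (Matrix.diagonal f * (Uᵀ * matIn μ M * U)) := by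
    rw [hh]; simp [Matrix.trace]
  have h2 : ∑ a, f a * Matrix.diag M a = Matrix.trace (Matrix.diagonal f * matIn μ M) := by
    simp [Matrix.trace, Matrix.diagonal_mul, matIn]
  rw [h1, h2, ← Matrix.mul_assoc, Matrix.trace_mul_comm, ← Matrix.mul_assoc, ← Matrix.mul_assoc,
    hcomm, Matrix.mul_assoc (Matrix.diagonal f), hUU, Matrix.mul_one]

end
end
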